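/- Let (T_i)_{i=1}^∞ be an almost-commuting, submultiplicative sequence of bounded linear operators on a Banach space X. Then the set of all absolutely mean irregular vectors is dense in the set of all absolutely mean semi-irregular vectors: for every absolutely mean semi-irregular vector x and every ε>0 there exists an absolutely mean irregular vector z with ‖x−z‖<ε. -/

import Mathlib

open Filter Topology

variable {X Y : Type*} [NormedAddCommGroup X] [NormedSpace ℝ X]
  [NormedAddCommGroup Y] [NormedSpace ℝ Y]

/-- The Cesàro average `(1/n) ∑_{i=1}^{n} ‖T i x - T i y‖`. -/
noncomputable def mavg (T : ℕ → X →L[ℝ] Y) (x y : X) (n : ℕ) : ℝ :=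
  (∑ i ∈ Finset.Icc 1 n, ‖T i x - T i y‖) / n

/-- The Cesàro average `(1/n) ∑_{i=1}^{n} ‖T i x‖`. -/
noncomputable def avg (T : ℕ → X →L[ℝ] Y) (x : X) (n : ℕ) : ℝ :=
  (∑ i ∈ Finset.Icc 1 n, ‖T i x‖) / n

/-- `limsup_n (1/n) ∑_{i=1}^{n} ‖T i x - T i y‖`, computed in `EReal`. -/
noncomputable def msup (T : ℕ → X →L[ℝ] Y) (x y : X) : EReal :=
  Filter.limsup (fun n => (mavg T x y n : EReal)) Filter.atTop

/-- `liminf_n (1/n) ∑_{i=1}^{n} ‖T i x - T i y‖`, computed in `EReal`. -/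
noncomputable def minf (T : ℕ → X →L[ℝ] Y) (x y : X) : EReal :=
  Filter.liminf (fun n => (mavg T x y n : EReal)) Filter.atTop

/-- `limsup_n (1/n) ∑_{i=1}^{n} ‖T i x‖`, computed in `EReal`. -/
noncomputable def asup (T : ℕ → X →L[ℝ] Y) (x : X) : EReal :=
  Filter.limsup (fun n => (avg T x n : EReal)) Filter.atTop

/-- `liminf_n (1/n) ∑_{i=1}^{n} ‖T i x‖`, computed in `EReal`. -/
noncomputable def ainf (T : ℕ → X →L[ℝ] Y) (x : X) : EReal :=
  Filter.liminf (fun n => (avg T x n : EReal)) Filter.atTop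

/-- `(T i)` is submultiplicative. -/
def Submultiplicative (T : ℕ → X →L[ℝ] X) : Prop :=
  ∃ C : ℝ, 0 < C ∧ ∀ z : X, ∀ i m : ℕ, 1 ≤ i → 1 ≤ m →
    ‖T (i + m) z‖ ≤ C * ‖T i (T m z)‖

/-- `(T i)` is almost-commuting. -/
def AlmostCommuting (T : ℕ → X →L[ℝ] X) : Prop :=
  ∀ x : X, ∀ k : ℕ, 1 ≤ k →
    Filter.Tendsto (fun i => T i (T k x) - T k (T i x)) Filter.atTop (nhds 0)

/-!
Let `x` be semi-irregular. Choose an ultrafilter `l ≤ atTop` along which the averages of `x` tend to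
`0`, and let `M` be the subspace of all vectors with that property. Almost-commutation makes `M`
contain the orbit of `x`, and this orbit has members of arbitrarily small norm. By
submultiplicativity `avg T x n ≤ O(1/n) + C * avg T (T i x) n`, and the averages of `x` do not tend
to `0`, so those of every `T i x` exceed one positive constant independent of `i`: the seminorms
`avg T · n` are not equicontinuous at `0` on `M`. Condensation of singularities in the closure of
`M` then makes the irregular vectors residual there.
-/

section ExtendedLimits

variable {ι : Type*} {l : Filter ι} {u : ι → ℝ}

theorem liminf_coe_ereal_eq_zero_iff_mapClusterPt (hu : ∀ n, 0 ≤ u n) :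
    liminf (fun n => (u n : EReal)) l = 0 ↔ MapClusterPt 0 l u := by
  have h_nonneg : 0 ≤ liminf (fun n => (u n : EReal)) l :=
    le_liminf_of_le (by isBoundedDefault) (.of_forall fun n => EReal.coe_nonneg.2 (hu n))
  rw [← h_nonneg.ge_iff_eq', liminf_le_iff', Metric.nhds_basis_ball.mapClusterPt_iff_frequently]
  simp only [Metric.mem_ball, Real.dist_0_eq_abs, abs_of_nonneg (hu _)]
  constructor
  · intro h r hr
    refine (h (r / 2 : ℝ) (EReal.coe_pos.2 (half_pos hr))).mono fun n hn => ?_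
    exact (EReal.coe_le_coe_iff.1 hn).trans_lt (half_lt_self hr)
  · intro h y hy
    obtain ⟨r, hr, hry⟩ := EReal.lt_iff_exists_real_btwn.1 hy
    refine (h r (EReal.coe_pos.1 hr)).mono fun n hn => ?_
    exact (EReal.coe_le_coe hn.le).trans hry.le

theorem limsup_coe_ereal_eq_top_of_not_bddAbove {u : ℕ → ℝ} (hu : ¬ BddAbove (Set.range u)) :
    limsup (fun n => (u n : EReal)) atTop = ⊤ := by
  rw [← top_le_iff, le_limsup_iff']
  intro y hy
  contrapose! hu
  obtain ⟨r, hyr, -⟩ := EReal.lt_iff_exists_real_btwn.1 hy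
  have h_le : ∀ᶠ n in atTop, u n ≤ r :=
    hu.mono fun n hn => EReal.coe_le_coe_iff.1 (hn.trans hyr).le
  exact IsBoundedUnder.bddAbove_range ⟨r, h_le⟩

theorem exists_pos_frequently_lt_of_pos_limsup_coe_ereal
    (h : 0 < limsup (fun n => (u n : EReal)) l) : ∃ δ : ℝ, 0 < δ ∧ ∃ᶠ n in l, δ < u n := by
  obtain ⟨δ, hδ, hδu⟩ := EReal.lt_iff_exists_real_btwn.1 h
  exact ⟨δ, EReal.coe_pos.1 hδ,
    (frequently_lt_of_lt_limsup (by isBoundedDefault) hδu).mono fun n => EReal.coe_lt_coe_iff.1⟩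

end ExtendedLimits

section GDelta

variable {E ι : Type*} [TopologicalSpace E] {l : Filter ι} [l.IsCountablyGenerated]

theorem isGδ_setOf_frequently_mem {U : ι → Set E} (hU : ∀ n, IsOpen (U n)) :
    IsGδ {y | ∃ᶠ n in l, y ∈ U n} := by
  obtain ⟨s, hs⟩ := l.exists_antitone_basis
  have h_eq : {y | ∃ᶠ n in l, y ∈ U n} = ⋂ k, ⋃ n ∈ s k, U n := by
    ext y
    simp [hs.1.frequently_iff]
  rw [h_eq]
  exact .iInter_of_isOpen fun k => isOpen_biUnion fun n _ => hU n

theorem isGδ_setOf_mapClusterPt {F : Type*} [TopologicalSpace F] [FirstCountableTopology F]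
    {f : ι → E → F} (hf : ∀ n, Continuous (f n)) (a : F) :
    IsGδ {y | MapClusterPt a l (f · y)} := by
  obtain ⟨V, hV, hVa⟩ := (nhds_basis_opens a).exists_antitone_subbasis
  simp only [hVa.1.mapClusterPt_iff_frequently, true_imp_iff, Set.ofPred_forall]
  exact .iInter fun k => isGδ_setOf_frequently_mem fun n => (hV k).2.preimage (hf n)

end GDelta

section Condensation

variable {𝕜 E ι : Type*} [NontriviallyNormedField 𝕜] [AddCommGroup E] [Module 𝕜 E]
  [TopologicalSpace E] [ContinuousConstSMul 𝕜 E] {p : ι → Seminorm 𝕜 E} {c : ℝ}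

theorem frequently_nhds_zero_exists_lt_seminorm (hc : 0 < c)
    (h : ∃ᶠ v in 𝓝 (0 : E), ∃ n, c < p n v) (K : ℝ) : ∃ᶠ v in 𝓝 (0 : E), ∃ n, K < p n v := by
  obtain ⟨a, ha⟩ := NormedField.exists_lt_norm 𝕜 (K / c)
  have h_smul : Tendsto (a • · : E → E) (𝓝 0) (𝓝 0) := by
    simpa only [smul_zero] using (continuous_const_smul a).tendsto (0 : E)
  refine h_smul.frequently (h.mono ?_)
  rintro v ⟨n, hn⟩
  refine ⟨n, ?_⟩
  calc K < ‖a‖ * c := (div_lt_iff₀ hc).1 ha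
    _ ≤ ‖a‖ * p n v := by gcongr
    _ = p n (a • v) := (map_smul_eq_mul (p n) a v).symm

variable [ContinuousAdd E]

theorem dense_setOf_exists_lt_seminorm (hc : 0 < c)
    (h : ∃ᶠ v in 𝓝 (0 : E), ∃ n, c < p n v) (K : ℝ) : Dense {y | ∃ n, K < p n y} := by
  intro y
  rw [mem_closure_iff_frequently]
  by_contra h_bdd
  simp only [not_frequently, Set.mem_ofPred_eq, not_exists, not_lt] at h_bdd
  have h_translate : Tendsto (· + y) (𝓝 0) (𝓝 y) := by
    simpa only [zero_add] using (continuous_add_const y).tendsto (0 : E)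
  have h_bdd_zero : ∀ᶠ v in 𝓝 (0 : E), ∀ n, p n v ≤ K + K := by
    filter_upwards [h_translate.eventually h_bdd] with v hv n
    calc p n v = p n (v + y - y) := by rw [add_sub_cancel_right]
      _ ≤ p n (v + y) + p n y := map_sub_le_add (p n) _ _
      _ ≤ K + K := add_le_add (hv n) (h_bdd.self_of_nhds n)
  obtain ⟨v, ⟨n, hn⟩, hv⟩ :=
    ((frequently_nhds_zero_exists_lt_seminorm hc h (K + K)).and_eventually h_bdd_zero).exists
  exact hn.not_ge (hv n)

theorem eventually_residual_not_bddAbove_seminorm (hp : ∀ n, Continuous (p n)) (hc : 0 < c)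
    (h : ∃ᶠ v in 𝓝 (0 : E), ∃ n, c < p n v) :
    ∀ᶠ y in residual E, ¬ BddAbove (Set.range (p · y)) := by
  have h_large (K : ℕ) : ∀ᶠ y in residual E, ∃ n, K < p n y := by
    have h_open : IsOpen {y | ∃ n, K < p n y} := by
      simpa only [Set.ofPred_exists] using
        isOpen_iUnion fun n => isOpen_lt continuous_const (hp n)
    exact residual_of_dense_open h_open (dense_setOf_exists_lt_seminorm hc h K)
  filter_upwards [eventually_countable_forall.2 h_large] with y hy
  rintro ⟨b, hb⟩
  obtain ⟨K, hK⟩ := exists_nat_ge b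
  obtain ⟨n, hn⟩ := hy K
  exact (hK.trans_lt hn).not_ge (hb ⟨n, rfl⟩)

theorem dense_setOf_mapClusterPt_zero_and_not_bddAbove_seminorm [BaireSpace E]
    {l : Filter ι} [l.IsCountablyGenerated] (hp : ∀ n, Continuous (p n))
    (h_null : Dense {y | MapClusterPt 0 l (p · y)}) (hc : 0 < c)
    (h : ∃ᶠ v in 𝓝 (0 : E), ∃ n, c < p n v) :
    Dense {y | MapClusterPt 0 l (p · y) ∧ ¬ BddAbove (Set.range (p · y))} :=
  dense_of_mem_residual <| inter_mem
    (residual_of_dense_Gδ (isGδ_setOf_mapClusterPt hp 0) h_null)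
    (eventually_residual_not_bddAbove_seminorm hp hc h)

end Condensation

theorem subset_closure_setOf_mapClusterPt_zero_and_not_bddAbove_seminorm
    {𝕜 E ι : Type*} [NontriviallyNormedField 𝕜]
    [SeminormedAddCommGroup E] [NormedSpace 𝕜 E] [CompleteSpace E]
    {l : Filter ι} [l.IsCountablyGenerated] {p : ι → Seminorm 𝕜 E} (hp : ∀ n, Continuous (p n))
    {M : Submodule 𝕜 E} (hM : ∀ y ∈ M, MapClusterPt 0 l (p · y)) {c : ℝ} (hc : 0 < c)
    (h : ∃ᶠ v in 𝓝[M] (0 : E), ∃ n, c < p n v) :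
    (M : Set E) ⊆ closure {y | MapClusterPt 0 l (p · y) ∧ ¬ BddAbove (Set.range (p · y))} := by
  let N := M.topologicalClosure
  have h_le : (M : Set E) ⊆ N := M.le_topologicalClosure
  have : CompleteSpace N := M.isClosed_topologicalClosure.completeSpace_coe
  let q (n : ι) : Seminorm 𝕜 N := (p n).comp N.subtype
  have hq (n : ι) : Continuous (q n) := (hp n).comp continuous_subtype_val
  have hq_null : Dense {y : N | MapClusterPt 0 l (q · y)} := by
    refine Subtype.dense_iff.2 (closure_mono fun y hy => ?_)
    exact ⟨⟨y, h_le hy⟩, hM y hy, rfl⟩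
  have hq_large : ∃ᶠ v in 𝓝 (0 : N), ∃ n, c < q n v := by
    have := h.filter_mono (nhdsWithin_mono 0 h_le)
    rwa [← ZeroMemClass.coe_zero N, ← map_nhds_subtype_val, frequently_map] at this
  have h_dense := dense_setOf_mapClusterPt_zero_and_not_bddAbove_seminorm hq hq_null hc hq_large
  exact h_le.trans <| (Subtype.dense_iff.1 h_dense).trans <|
    closure_mono <| Set.image_subset_iff.2 fun _ hy => hy

section VanishingSubmodule

variable {𝕜 E ι : Type*} [SeminormedRing 𝕜] [AddCommGroup E] [Module 𝕜 E]

/-- The subspace of vectors `x` at which the family of seminorms `p` tends to `0` along `l`. -/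
def vanishingSubmodule (p : ι → Seminorm 𝕜 E) (l : Filter ι) : Submodule 𝕜 E where
  carrier := {x | Tendsto (p · x) l (𝓝 0)}
  zero_mem' := by simpa using tendsto_const_nhds
  add_mem' {x y} hx hy := squeeze_zero (fun n => apply_nonneg (p n) _)
    (fun n => map_add_le_add (p n) x y) (by simpa using Tendsto.add hx hy)
  smul_mem' a x hx := by simpa [map_smul_eq_mul] using Tendsto.const_mul ‖a‖ hx

theorem mem_vanishingSubmodule {p : ι → Seminorm 𝕜 E} {l : Filter ι} {x : E} :
    x ∈ vanishingSubmodule p l ↔ Tendsto (p · x) l (𝓝 0) :=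
  Iff.rfl

end VanishingSubmodule

section Averages

theorem avg_nonneg (T : ℕ → X →L[ℝ] Y) (x : X) (n : ℕ) : 0 ≤ avg T x n := by
  unfold avg
  positivity

/-- The Cesàro average `avg T · n` as a seminorm. -/
noncomputable def avgSeminorm (T : ℕ → X →L[ℝ] Y) (n : ℕ) : Seminorm ℝ X :=
  Seminorm.of (avg T · n)
    (fun x y => by
      unfold avg
      rw [← add_div, ← Finset.sum_add_distrib]
      gcongr with i
      rw [map_add]
      exact norm_add_le _ _)
    (fun a x => by
      simp only [avg, map_smul, norm_smul, ← Finset.mul_sum, mul_div_assoc])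

theorem avgSeminorm_apply (T : ℕ → X →L[ℝ] Y) (n : ℕ) (x : X) :
    avgSeminorm T n x = avg T x n :=
  rfl

theorem continuous_avgSeminorm (T : ℕ → X →L[ℝ] Y) (n : ℕ) : Continuous (avgSeminorm T n) := by
  change Continuous fun x => (∑ i ∈ Finset.Icc 1 n, ‖T i x‖) / n
  fun_prop

theorem ainf_eq_zero_iff_mapClusterPt {T : ℕ → X →L[ℝ] Y} {x : X} :
    ainf T x = 0 ↔ MapClusterPt 0 atTop (avg T x) :=
  liminf_coe_ereal_eq_zero_iff_mapClusterPt (avg_nonneg T x)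

theorem sum_Icc_one_eq_sum_range (u : ℕ → ℝ) (n : ℕ) :
    ∑ i ∈ Finset.Icc 1 n, u i = ∑ i ∈ Finset.range n, u (i + 1) := by
  rw [Finset.range_eq_Ico, Finset.sum_Ico_add' u 0 n 1]
  rfl

theorem tendsto_sum_Icc_one_div {u : ℕ → ℝ} {a : ℝ} (hu : Tendsto u atTop (𝓝 a)) :
    Tendsto (fun n : ℕ => (∑ i ∈ Finset.Icc 1 n, u i) / n) atTop (𝓝 a) := by
  simpa only [sum_Icc_one_eq_sum_range, div_eq_inv_mul] using
    ((tendsto_add_atTop_iff_nat 1).2 hu).cesaro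

theorem exists_norm_apply_le_avg (T : ℕ → X →L[ℝ] Y) (x : X) {n : ℕ} (hn : n ≠ 0) :
    ∃ i, 1 ≤ i ∧ ‖T i x‖ ≤ avg T x n := by
  have h_nonempty : (Finset.Icc 1 n).Nonempty :=
    Finset.nonempty_Icc.2 (Nat.one_le_iff_ne_zero.2 hn)
  have h_sum : ∑ i ∈ Finset.Icc 1 n, ‖T i x‖ ≤ ∑ _i ∈ Finset.Icc 1 n, avg T x n := by
    have hn' : (n : ℝ) ≠ 0 := Nat.cast_ne_zero.2 hn
    simp [avg, mul_div_cancel₀ _ hn']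
  obtain ⟨i, hi, hi_le⟩ := Finset.exists_le_of_sum_le h_nonempty h_sum
  exact ⟨i, (Finset.mem_Icc.1 hi).1, hi_le⟩

theorem zero_mem_closure_orbit_of_mapClusterPt_avg {T : ℕ → X →L[ℝ] Y} {x : X}
    (hx : MapClusterPt 0 atTop (avg T x)) : (0 : Y) ∈ closure ((T · x) '' Set.Ici 1) := by
  rw [Metric.mem_closure_iff]
  intro ε hε
  have h_small : ∃ᶠ n in atTop, avg T x n < ε := hx.frequently (gt_mem_nhds hε)
  obtain ⟨n, hnε, hn⟩ := (h_small.and_eventually (eventually_ne_atTop 0)).exists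
  obtain ⟨i, hi, hi_le⟩ := exists_norm_apply_le_avg T x hn
  exact ⟨T i x, Set.mem_image_of_mem _ hi, by simpa using hi_le.trans_lt hnε⟩

end Averages

section OperatorSequences

variable {T : ℕ → X →L[ℝ] X} {x : X}

theorem avg_apply_le_add (T : ℕ → X →L[ℝ] X) (x : X) (k n : ℕ) :
    avg T (T k x) n ≤
      ‖T k‖ * avg T x n + (∑ i ∈ Finset.Icc 1 n, ‖T i (T k x) - T k (T i x)‖) / n := by
  unfold avg
  rw [← mul_div_assoc, Finset.mul_sum, ← add_div, ← Finset.sum_add_distrib]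
  gcongr with i
  calc ‖T i (T k x)‖ ≤ ‖T k (T i x)‖ + ‖T i (T k x) - T k (T i x)‖ := norm_le_norm_add_norm_sub' _ _
    _ ≤ ‖T k‖ * ‖T i x‖ + ‖T i (T k x) - T k (T i x)‖ := by
      gcongr
      exact (T k).le_opNorm _

theorem AlmostCommuting.apply_mem_vanishingSubmodule (hT : AlmostCommuting T) {l : Filter ℕ}
    (hl : l ≤ atTop) (hx : x ∈ vanishingSubmodule (avgSeminorm T) l) {k : ℕ} (hk : 1 ≤ k) :
    T k x ∈ vanishingSubmodule (avgSeminorm T) l := by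
  simp only [mem_vanishingSubmodule, avgSeminorm_apply] at hx ⊢
  have h_comm : Tendsto (fun n : ℕ => (∑ i ∈ Finset.Icc 1 n, ‖T i (T k x) - T k (T i x)‖) / n)
      atTop (𝓝 0) :=
    tendsto_sum_Icc_one_div (by simpa only [norm_zero] using (hT x k hk).norm)
  refine squeeze_zero (avg_nonneg T _) (avg_apply_le_add T x k) ?_
  simpa only [mul_zero, add_zero] using (hx.const_mul ‖T k‖).add (h_comm.mono_left hl)

theorem avg_le_add_avg_apply {C : ℝ} {i : ℕ}
    (hC : ∀ m, 1 ≤ m → ‖T (m + i) x‖ ≤ C * ‖T m (T i x)‖) (n : ℕ) :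
    avg T x n ≤ (∑ j ∈ Finset.Icc 1 i, ‖T j x‖) / n + C * avg T (T i x) n := by
  unfold avg
  rw [← mul_div_assoc, ← add_div]
  gcongr
  calc ∑ j ∈ Finset.Icc 1 n, ‖T j x‖ ≤ ∑ j ∈ Finset.Icc 1 (i + n), ‖T j x‖ := by
        gcongr
        exact Nat.le_add_left n i
    _ = ∑ j ∈ Finset.Icc 1 i, ‖T j x‖ + ∑ j ∈ Finset.Icc 1 n, ‖T (j + i) x‖ := by
        simp only [sum_Icc_one_eq_sum_range, Finset.sum_range_add, add_right_comm _ 1 i]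
        simp only [add_comm i]
    _ ≤ ∑ j ∈ Finset.Icc 1 i, ‖T j x‖ + C * ∑ j ∈ Finset.Icc 1 n, ‖T j (T i x)‖ := by
        rw [Finset.mul_sum]
        gcongr with j hj
        exact hC j (Finset.mem_Icc.1 hj).1

theorem frequently_lt_avg_apply {C δ c : ℝ} {i : ℕ} (hC_pos : 0 < C)
    (hC : ∀ m, 1 ≤ m → ‖T (m + i) x‖ ≤ C * ‖T m (T i x)‖) (hc : C * c < δ)
    (hδ : ∃ᶠ n in atTop, δ < avg T x n) : ∃ᶠ n in atTop, c < avg T (T i x) n := by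
  have h_head : ∀ᶠ n : ℕ in atTop, (∑ j ∈ Finset.Icc 1 i, ‖T j x‖) / n < δ - C * c :=
    (tendsto_const_div_atTop_nhds_zero_nat _).eventually (gt_mem_nhds (sub_pos.2 hc))
  refine (hδ.and_eventually h_head).mono ?_
  rintro n ⟨hδn, hn⟩
  refine lt_of_mul_lt_mul_left ?_ hC_pos.le
  linarith [avg_le_add_avg_apply hC n]

theorem Submultiplicative.exists_pos_frequently_lt_avgSeminorm (hT : Submultiplicative T)
    (h_inf : MapClusterPt 0 atTop (avg T x)) (h_sup : 0 < asup T x) {M : Set X}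
    (hM : ∀ i, 1 ≤ i → T i x ∈ M) :
    ∃ c, 0 < c ∧ ∃ᶠ v in 𝓝[M] (0 : X), ∃ n, c < avgSeminorm T n v := by
  obtain ⟨C, hC_pos, hC⟩ := hT
  obtain ⟨δ, hδ_pos, hδ⟩ := exists_pos_frequently_lt_of_pos_limsup_coe_ereal h_sup
  obtain ⟨c, hc_pos, hc⟩ := exists_pos_mul_lt hδ_pos C
  refine ⟨c, hc_pos, frequently_nhdsWithin_iff.2 ?_⟩
  refine (mem_closure_iff_frequently.1 (zero_mem_closure_orbit_of_mapClusterPt_avg h_inf)).mono ?_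
  rintro _ ⟨i, hi, rfl⟩
  have h_large : ∃ᶠ n in atTop, c < avg T (T i x) n :=
    frequently_lt_avg_apply hC_pos (fun m hm => hC x m i hm hi) hc hδ
  exact ⟨h_large.exists, hM i hi⟩

end OperatorSequences

/-- For an almost-commuting, submultiplicative sequence of bounded linear operators on
a Banach space, the absolutely mean irregular vectors are dense in the set of
absolutely mean semi-irregular vectors. -/
theorem absolutelyMeanIrregular_dense_in_semiIrregular [CompleteSpace X]
    (T : ℕ → X →L[ℝ] X) (hac : AlmostCommuting T) (hsub : Submultiplicative T) :
    ∀ x : X, (ainf T x = 0 ∧ 0 < asup T x) → ∀ ε : ℝ, 0 < ε →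
      ∃ z : X, ‖x - z‖ < ε ∧ ainf T z = 0 ∧ asup T z = ⊤ := by
  rintro x ⟨h_inf, h_sup⟩ ε hε
  rw [ainf_eq_zero_iff_mapClusterPt] at h_inf
  obtain ⟨l, hl, hxl⟩ := mapClusterPt_iff_ultrafilter.1 h_inf
  let M := vanishingSubmodule (avgSeminorm T) l
  have hxM : x ∈ M := hxl
  have hM : ∀ y ∈ M, MapClusterPt 0 atTop (avg T y) := fun y hy =>
    mapClusterPt_iff_ultrafilter.2 ⟨l, hl, hy⟩
  obtain ⟨c, hc, h_large⟩ := hsub.exists_pos_frequently_lt_avgSeminorm h_inf h_sup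
    (M := M) fun i hi => hac.apply_mem_vanishingSubmodule hl hxM hi
  have hx_closure := subset_closure_setOf_mapClusterPt_zero_and_not_bddAbove_seminorm
    (continuous_avgSeminorm T) hM hc h_large hxM
  obtain ⟨z, ⟨hz_inf, hz_sup⟩, hxz⟩ := Metric.mem_closure_iff.1 hx_closure ε hε
  exact ⟨z, by rwa [← dist_eq_norm], ainf_eq_zero_iff_mapClusterPt.2 hz_inf,
    limsup_coe_ereal_eq_top_of_not_bddAbove hz_sup⟩
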